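/- arXiv:2107.09310 — 2 statements merged into one kernel-verified Lean document; each statement's English description precedes it below -/
import Mathlib

section
/- Let n ≥ 1, let p, q : {1,…,n} → ℝ≥0, and let 0 ≤ Δ ≤ n. Then for every M ⊆ {1,…,n} with |M| ≥ Δ, OPT(Δ) ≤ f(M) ≤ 2·OPT(Δ); i.e. the optimal pair of schedules agreeing on the positions of all jobs in M is a feasible 2-approximate solution to RecSMSP. -/
open Finset

/-- Cost of a schedule `σ` (position `i`, 0-indexed, has weight `n - i`,
i.e. position `i+1` in 1-indexed notation has weight `n + 1 - (i+1)`). -/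
noncomputable def cost (n : ℕ) (w : Fin n → ℝ) (σ : Equiv.Perm (Fin n)) : ℝ :=
  ∑ i : Fin n, ((n : ℝ) - ((i : ℕ) : ℝ)) * w (σ i)

/-- `f(M)`: minimal combined cost over pairs of schedules agreeing on the
positions of all jobs in `M`. -/
noncomputable def fval (n : ℕ) (p q : Fin n → ℝ) (M : Finset (Fin n)) : ℝ :=
  sInf {v : ℝ | ∃ σ τ : Equiv.Perm (Fin n),
    (∀ j ∈ M, σ.symm j = τ.symm j) ∧ v = cost n p σ + cost n q τ}

/-- `OPT(Δ)`: optimal value of the recoverable robust single machine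
scheduling problem. -/
noncomputable def OPT (n : ℕ) (p q : Fin n → ℝ) (Δ : ℕ) : ℝ :=
  sInf {v : ℝ | ∃ σ τ : Equiv.Perm (Fin n),
    Δ ≤ (Finset.univ.filter (fun j => σ.symm j = τ.symm j)).card ∧
    v = cost n p σ + cost n q τ}

/-- Value of (UB-SMSP): both stages forced identical. -/
noncomputable def UBval (n : ℕ) (p q : Fin n → ℝ) : ℝ :=
  sInf {v : ℝ | ∃ σ : Equiv.Perm (Fin n), v = cost n (fun j => p j + q j) σ}

/-- Value of (LB-SMSP): the two stages optimised independently. -/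
noncomputable def LBval (n : ℕ) (p q : Fin n → ℝ) : ℝ :=
  sInf {v : ℝ | ∃ σ : Equiv.Perm (Fin n), v = cost n p σ} +
  sInf {v : ℝ | ∃ τ : Equiv.Perm (Fin n), v = cost n q τ}

/-!
Forcing the two stages to agree everywhere bounds `f(M)` above by `UBval`, and dropping the recovery
constraint bounds `OPT(Δ)` below by `LBval`; so it suffices that `UBval ≤ 2 * LBval`. Given optimal
schedules `σ` and `τ` of the two stages, process the jobs in order of the later of their two
positions. The weight of a job `j` is the number of jobs that do not precede it. If `a` is the later
of the two positions of `j`, then any such job has position at least `a` in `σ` or in `τ`, which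
leaves at most `n - a` candidates from each: twice the smaller of the two weights of `j`.
-/

section Cost

variable {n : ℕ}

lemma cost_eq_sum_symm (w : Fin n → ℝ) (σ : Equiv.Perm (Fin n)) :
    cost n w σ = ∑ j, ((n : ℝ) - (σ.symm j : ℕ)) * w j :=
  Fintype.sum_equiv σ _ _ fun i => by rw [Equiv.symm_apply_apply]

lemma cost_add (p q : Fin n → ℝ) (σ : Equiv.Perm (Fin n)) :
    cost n (fun j => p j + q j) σ = cost n p σ + cost n q σ := by
  simp only [cost, mul_add, Finset.sum_add_distrib]

lemma cost_le_mul_cost {w : Fin n → ℝ} (hw : ∀ j, 0 ≤ w j) {π σ : Equiv.Perm (Fin n)} {c : ℝ}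
    (h : ∀ j, (n : ℝ) - (π.symm j : ℕ) ≤ c * (n - (σ.symm j : ℕ))) :
    cost n w π ≤ c * cost n w σ := by
  simp only [cost_eq_sum_symm, Finset.mul_sum, ← mul_assoc]
  exact Finset.sum_le_sum fun j _ => mul_le_mul_of_nonneg_right (h j) (hw j)

lemma finite_setOf_cost (w : Fin n → ℝ) :
    {v : ℝ | ∃ σ : Equiv.Perm (Fin n), v = cost n w σ}.Finite :=
  (Set.finite_range (cost n w)).subset fun _ ⟨σ, hv⟩ => ⟨σ, hv.symm⟩

lemma finite_setOf_cost_add_cost (p q : Fin n → ℝ)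
    (P : Equiv.Perm (Fin n) → Equiv.Perm (Fin n) → Prop) :
    {v : ℝ | ∃ σ τ : Equiv.Perm (Fin n), P σ τ ∧ v = cost n p σ + cost n q τ}.Finite :=
  (Set.finite_range fun s : Equiv.Perm (Fin n) × Equiv.Perm (Fin n) =>
    cost n p s.1 + cost n q s.2).subset fun _ ⟨σ, τ, _, hv⟩ => ⟨(σ, τ), hv.symm⟩

lemma exists_sInf_eq_cost (w : Fin n → ℝ) :
    ∃ σ : Equiv.Perm (Fin n),
      sInf {v : ℝ | ∃ σ : Equiv.Perm (Fin n), v = cost n w σ} = cost n w σ :=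
  Set.Nonempty.csInf_mem (s := {v | ∃ σ, v = cost n w σ}) ⟨_, 1, rfl⟩ (finite_setOf_cost w)

end Cost

section Merge

variable {n : ℕ}

lemma sub_sort_symm_le_card {α : Type*} [LinearOrder α] (f : Fin n → α) (j : Fin n) :
    n - ((Tuple.sort f).symm j : ℕ) ≤ #{k | f j ≤ f k} := by
  rw [← Fin.card_Ici]
  refine card_le_card_of_injOn (Tuple.sort f) (fun i hi => ?_) (Tuple.sort f).injective.injOn
  have hf := Tuple.monotone_sort f (mem_Ici.mp hi)
  simpa using hf

lemma card_filter_le_symm (σ : Equiv.Perm (Fin n)) (a : Fin n) :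
    #{k | a ≤ σ.symm k} = n - (a : ℕ) := by
  rw [← Fin.card_Ici]
  exact card_equiv σ.symm fun k => by simp

lemma card_filter_le_max_symm_le (σ τ : Equiv.Perm (Fin n)) (a : Fin n) :
    #{k | a ≤ max (σ.symm k) (τ.symm k)} ≤ 2 * (n - (a : ℕ)) := by
  calc #{k | a ≤ max (σ.symm k) (τ.symm k)}
      = #(univ.filter (a ≤ σ.symm ·) ∪ univ.filter (a ≤ τ.symm ·)) := by
        simp only [le_max_iff, filter_or]
    _ ≤ #{k | a ≤ σ.symm k} + #{k | a ≤ τ.symm k} := card_union_le _ _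
    _ = 2 * (n - (a : ℕ)) := by rw [card_filter_le_symm, card_filter_le_symm, two_mul]

/-- The merge of two schedules: the jobs in order of the later of their two positions, with ties
broken by job index. It serves as a common schedule for both stages. -/
def mergeSchedules (σ τ : Equiv.Perm (Fin n)) : Equiv.Perm (Fin n) :=
  Tuple.sort fun j => max (σ.symm j) (τ.symm j)

lemma mergeSchedules_comm (σ τ : Equiv.Perm (Fin n)) :
    mergeSchedules σ τ = mergeSchedules τ σ := by
  simp only [mergeSchedules, max_comm]

lemma sub_mergeSchedules_symm_le (σ τ : Equiv.Perm (Fin n)) (j : Fin n) :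
    n - ((mergeSchedules σ τ).symm j : ℕ) ≤ 2 * (n - (σ.symm j : ℕ)) :=
  calc n - ((mergeSchedules σ τ).symm j : ℕ)
      ≤ #{k | max (σ.symm j) (τ.symm j) ≤ max (σ.symm k) (τ.symm k)} :=
        sub_sort_symm_le_card _ j
    _ ≤ 2 * (n - (max (σ.symm j) (τ.symm j) : Fin n)) := card_filter_le_max_symm_le σ τ _
    _ ≤ 2 * (n - (σ.symm j : ℕ)) := by gcongr; exact le_max_left _ _

lemma cost_mergeSchedules_le_left {w : Fin n → ℝ} (hw : ∀ j, 0 ≤ w j)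
    (σ τ : Equiv.Perm (Fin n)) : cost n w (mergeSchedules σ τ) ≤ 2 * cost n w σ := by
  refine cost_le_mul_cost hw fun j => ?_
  rw [← Nat.cast_sub Fin.is_le', ← Nat.cast_sub Fin.is_le']
  exact_mod_cast sub_mergeSchedules_symm_le σ τ j

lemma cost_mergeSchedules_le_right {w : Fin n → ℝ} (hw : ∀ j, 0 ≤ w j)
    (σ τ : Equiv.Perm (Fin n)) : cost n w (mergeSchedules σ τ) ≤ 2 * cost n w τ :=
  mergeSchedules_comm σ τ ▸ cost_mergeSchedules_le_left hw τ σ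

end Merge

section Bounds

variable {n : ℕ} {p q : Fin n → ℝ}

lemma UBval_le_cost_add_cost (π : Equiv.Perm (Fin n)) :
    UBval n p q ≤ cost n p π + cost n q π :=
  csInf_le (finite_setOf_cost _).bddBelow ⟨π, (cost_add p q π).symm⟩

lemma LBval_le_cost_add_cost (σ τ : Equiv.Perm (Fin n)) :
    LBval n p q ≤ cost n p σ + cost n q τ :=
  add_le_add (csInf_le (finite_setOf_cost p).bddBelow ⟨σ, rfl⟩)
    (csInf_le (finite_setOf_cost q).bddBelow ⟨τ, rfl⟩)

lemma UBval_le_two_mul_LBval (hp : ∀ j, 0 ≤ p j) (hq : ∀ j, 0 ≤ q j) :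
    UBval n p q ≤ 2 * LBval n p q := by
  obtain ⟨σ, hσ⟩ := exists_sInf_eq_cost p
  obtain ⟨τ, hτ⟩ := exists_sInf_eq_cost q
  calc UBval n p q
      ≤ cost n p (mergeSchedules σ τ) + cost n q (mergeSchedules σ τ) :=
        UBval_le_cost_add_cost _
    _ ≤ 2 * cost n p σ + 2 * cost n q τ :=
        add_le_add (cost_mergeSchedules_le_left hp σ τ) (cost_mergeSchedules_le_right hq σ τ)
    _ = 2 * LBval n p q := by rw [LBval, hσ, hτ, mul_add]

lemma fval_le_UBval (M : Finset (Fin n)) : fval n p q M ≤ UBval n p q := by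
  refine csInf_le_csInf (finite_setOf_cost_add_cost p q _).bddBelow ⟨_, 1, rfl⟩ ?_
  rintro v ⟨σ, rfl⟩
  exact ⟨σ, σ, fun _ _ => rfl, cost_add p q σ⟩

lemma LBval_le_OPT {Δ : ℕ} (hΔ : Δ ≤ n) : LBval n p q ≤ OPT n p q Δ := by
  refine le_csInf ⟨_, 1, 1, by simpa using hΔ, rfl⟩ ?_
  rintro v ⟨σ, τ, -, rfl⟩
  exact LBval_le_cost_add_cost σ τ

lemma OPT_le_fval {Δ : ℕ} {M : Finset (Fin n)} (hM : Δ ≤ #M) :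
    OPT n p q Δ ≤ fval n p q M := by
  refine csInf_le_csInf (finite_setOf_cost_add_cost p q _).bddBelow
    ⟨_, 1, 1, fun _ _ => rfl, rfl⟩ ?_
  rintro v ⟨σ, τ, hστ, rfl⟩
  have hsub : M ⊆ univ.filter fun j => σ.symm j = τ.symm j := fun j hj => by simpa using hστ j hj
  exact ⟨σ, τ, hM.trans (card_le_card hsub), rfl⟩

end Bounds

/-- Corollary 3: for any `M` with `|M| ≥ Δ`, the optimal
pair of schedules agreeing on the positions of all jobs of `M` is a feasible
2-approximate solution to (RecSMSP): `OPT(Δ) ≤ f(M) ≤ 2·OPT(Δ)`. -/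
theorem stmt_7 (n : ℕ) (hn : 1 ≤ n) (p q : Fin n → ℝ)
    (hp : ∀ j, 0 ≤ p j) (hq : ∀ j, 0 ≤ q j) (Δ : ℕ) (hΔ : Δ ≤ n)
    (M : Finset (Fin n)) (hM : Δ ≤ M.card) :
    OPT n p q Δ ≤ fval n p q M ∧ fval n p q M ≤ 2 * OPT n p q Δ := by
  refine ⟨OPT_le_fval hM, ?_⟩
  calc fval n p q M
      ≤ UBval n p q := fval_le_UBval M
    _ ≤ 2 * LBval n p q := UBval_le_two_mul_LBval hp hq
    _ ≤ 2 * OPT n p q Δ := by gcongr; exact LBval_le_OPT hΔ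
end

section
/- The approximation factor 2 for the identical-schedules upper bound is asymptotically tight: for every ε > 0 there exist n ≥ 1 and p, q : {1,…,n} → ℝ≥0 such that min_σ C_{p+q}(σ) > (2 − ε)·OPT(0), where OPT(0) is the optimal value of RecSMSP with Δ = 0, i.e. OPT(0) = (min_σ C_p(σ)) + (min_τ C_q(τ)). In particular, the ratio UB/LB for the fully-crossed 0-1 instances tends to 2 as n → ∞. -/
open Finset

/-!
Let `m` of `2m` jobs take time `0` in the first stage and `1` in the second, and the other `m` jobs
the reverse. Each stage on its own can schedule its zero-length jobs first and pay only `1 + ⋯ + m`,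
so `OPT(0) = m (m + 1)`. A common schedule sees total time `1` for every job and pays
`1 + ⋯ + 2m = m (2m + 1)`, whatever the order.
-/

open Filter Topology

section Append

variable {k l : ℕ} {α : Type*}

theorem append_comp_finAddFlip (a : Fin k → α) (b : Fin l → α) :
    Fin.append a b ∘ finAddFlip = Fin.append b a := by
  funext i
  refine Fin.addCases (fun i => ?_) (fun i => ?_) i <;> simp

theorem monotone_append [Preorder α] {a : Fin k → α} {b : Fin l → α} (ha : Monotone a)
    (hb : Monotone b) (hab : ∀ i j, a i ≤ b j) : Monotone (Fin.append a b) := by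
  simp only [Monotone, Fin.forall_fin_add, Fin.append_left, Fin.append_right]
  refine ⟨fun i => ⟨fun i' h => ha h, fun j _ => hab i j⟩,
    fun j => ⟨fun i h => ?_, fun j' h => hb ?_⟩⟩
  · exact absurd h (Fin.lt_def.mpr (Nat.lt_add_right j i.isLt)).not_ge
  · exact (Fin.natAdd_le_natAdd_iff k).mp h

end Append

section Cost

variable {n : ℕ} {w p q : Fin n → ℝ} {σ τ : Equiv.Perm (Fin n)}

theorem cost_comp_one (w : Fin n → ℝ) (σ : Equiv.Perm (Fin n)) :
    cost n (w ∘ σ) 1 = cost n w σ :=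
  rfl

theorem cost_le_cost_of_monotone (hσ : Monotone (w ∘ σ)) (τ : Equiv.Perm (Fin n)) :
    cost n w σ ≤ cost n w τ := by
  have weight_antitone : Antitone fun i : Fin n => (n : ℝ) - ((i : ℕ) : ℝ) :=
    fun i j hij => sub_le_sub_left (Nat.cast_le.mpr hij) _
  have rearrangement :=
    (weight_antitone.antivary hσ).sum_mul_le_sum_mul_comp_perm (σ := σ⁻¹ * τ)
  simpa [cost] using rearrangement

theorem OPT_zero_eq_of_monotone (hσ : Monotone (p ∘ σ)) (hτ : Monotone (q ∘ τ)) :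
    OPT n p q 0 = cost n p σ + cost n q τ := by
  refine IsLeast.csInf_eq ⟨⟨σ, τ, Nat.zero_le _, rfl⟩, ?_⟩
  rintro _ ⟨σ', τ', -, rfl⟩
  exact add_le_add (cost_le_cost_of_monotone hσ σ') (cost_le_cost_of_monotone hτ τ')

theorem sum_sub_val (n : ℕ) : ∑ i : Fin n, ((n : ℝ) - ((i : ℕ) : ℝ)) = n * (n + 1) / 2 := by
  induction n with
  | zero => simp
  | succ n ih =>
    simp only [Fin.sum_univ_succ, Fin.val_zero, Fin.val_succ, Nat.cast_add, Nat.cast_one,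
      Nat.cast_zero, add_sub_add_right_eq_sub, ih]
    ring

theorem cost_const (c : ℝ) (σ : Equiv.Perm (Fin n)) :
    cost n (fun _ => c) σ = n * (n + 1) / 2 * c := by
  rw [cost, ← Finset.sum_mul, sum_sub_val]

theorem UBval_eq_of_add_eq_const {c : ℝ} (h : ∀ j, p j + q j = c) :
    UBval n p q = n * (n + 1) / 2 * c := by
  simp [UBval, h, cost_const]

theorem cost_append_zero_left (k : ℕ) {l : ℕ} (w : Fin l → ℝ) :
    cost (k + l) (Fin.append 0 w) 1 = cost l w 1 := by
  simp [cost, Fin.sum_univ_add]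

end Cost

section CrossedInstance

/-- First-stage processing times of the fully crossed 0-1 instance on `2m` jobs: the first `m` jobs
have length `0` and the last `m` jobs have length `1`. -/
def crossedFirstStage (m : ℕ) : Fin (m + m) → ℝ :=
  Fin.append 0 1

/-- Second-stage processing times of the fully crossed 0-1 instance on `2m` jobs: the first `m` jobs
have length `1` and the last `m` jobs have length `0`. -/
def crossedSecondStage (m : ℕ) : Fin (m + m) → ℝ :=
  Fin.append 1 0

variable (m : ℕ)

theorem crossedSecondStage_comp_finAddFlip :
    crossedSecondStage m ∘ finAddFlip = crossedFirstStage m :=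
  append_comp_finAddFlip 1 0

theorem monotone_crossedFirstStage : Monotone (crossedFirstStage m) :=
  monotone_append monotone_const monotone_const fun _ _ => zero_le_one

theorem crossedFirstStage_nonneg : ∀ j, 0 ≤ crossedFirstStage m j := by
  simp only [crossedFirstStage, Fin.forall_fin_add, Fin.append_left, Fin.append_right,
    Pi.zero_apply, Pi.one_apply, le_refl, zero_le_one, implies_true, and_self]

theorem crossedSecondStage_nonneg : ∀ j, 0 ≤ crossedSecondStage m j := by
  simp only [crossedSecondStage, Fin.forall_fin_add, Fin.append_left, Fin.append_right,
    Pi.zero_apply, Pi.one_apply, le_refl, zero_le_one, implies_true, and_self]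

theorem crossedFirstStage_add_crossedSecondStage :
    ∀ j, crossedFirstStage m j + crossedSecondStage m j = 1 := by
  simp only [crossedFirstStage, crossedSecondStage, Fin.forall_fin_add, Fin.append_left,
    Fin.append_right, Pi.zero_apply, Pi.one_apply, zero_add, add_zero, implies_true, and_self]

theorem cost_crossedFirstStage : cost (m + m) (crossedFirstStage m) 1 = m * (m + 1) / 2 := by
  rw [crossedFirstStage, cost_append_zero_left]
  exact (cost_const 1 1).trans (mul_one _)

theorem cost_crossedSecondStage :
    cost (m + m) (crossedSecondStage m) finAddFlip = m * (m + 1) / 2 := by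
  rw [← cost_comp_one, crossedSecondStage_comp_finAddFlip, cost_crossedFirstStage]

theorem OPT_zero_crossed :
    OPT (m + m) (crossedFirstStage m) (crossedSecondStage m) 0 = m * (m + 1) := by
  have hσ : Monotone (crossedFirstStage m ∘ (1 : Equiv.Perm (Fin (m + m)))) :=
    monotone_crossedFirstStage m
  have hτ : Monotone (crossedSecondStage m ∘ finAddFlip) :=
    (crossedSecondStage_comp_finAddFlip m).symm ▸ monotone_crossedFirstStage m
  rw [OPT_zero_eq_of_monotone hσ hτ, cost_crossedFirstStage, cost_crossedSecondStage,
    add_halves]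

theorem UBval_crossed :
    UBval (m + m) (crossedFirstStage m) (crossedSecondStage m) = m * (2 * m + 1) := by
  rw [UBval_eq_of_add_eq_const (crossedFirstStage_add_crossedSecondStage m)]
  push_cast
  ring

theorem tendsto_UBval_div_OPT_zero_crossed :
    Tendsto (fun m : ℕ => UBval (m + m) (crossedFirstStage m) (crossedSecondStage m) /
      OPT (m + m) (crossedFirstStage m) (crossedSecondStage m) 0) atTop (𝓝 2) := by
  have limit : Tendsto (fun m : ℕ => 2 - 1 / ((m : ℝ) + 1)) atTop (𝓝 2) := by
    simpa using tendsto_one_div_add_atTop_nhds_zero_nat.const_sub (2 : ℝ)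
  refine limit.congr' ?_
  filter_upwards [eventually_gt_atTop 0] with m hm
  rw [UBval_crossed, OPT_zero_crossed]
  field_simp
  ring

end CrossedInstance

/-- the approximation factor 2 is asymptotically tight:
for every `ε > 0` there is an instance with
`UB > (2 − ε) · OPT(0)`, where `OPT(0) = LB`. -/
theorem stmt_11 :
    ∀ ε : ℝ, 0 < ε → ∃ (n : ℕ) (p q : Fin n → ℝ),
      1 ≤ n ∧ (∀ j, 0 ≤ p j) ∧ (∀ j, 0 ≤ q j) ∧
      (2 - ε) * OPT n p q 0 < UBval n p q := by
  intro ε hε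
  have ratio_gt := tendsto_UBval_div_OPT_zero_crossed.eventually_const_lt (sub_lt_self 2 hε)
  obtain ⟨m, hratio, hm⟩ := (ratio_gt.and (eventually_gt_atTop 0)).exists
  refine ⟨m + m, crossedFirstStage m, crossedSecondStage m, by lia,
    crossedFirstStage_nonneg m, crossedSecondStage_nonneg m, ?_⟩
  have OPT_pos : 0 < OPT (m + m) (crossedFirstStage m) (crossedSecondStage m) 0 := by
    rw [OPT_zero_crossed]
    positivity
  exact (lt_div_iff₀ OPT_pos).mp hratio
end
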